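/- The number of rooted quadrangulations of the sphere with n faces equals (2/(n+2)) · (3^n/(n+1)) · C(2n,n). -/

import Mathlib

/-- The number of orbits (cycles, including fixed points) of a permutation. -/
noncomputable def permOrbits {D : Type*} [Fintype D] (f : Equiv.Perm D) : ℕ :=
  Nat.card (Quotient (MulAction.orbitRel (Subgroup.zpowers f) D))

/-- A rooted quadrangulation of the sphere with `n` faces, encoded as a rooted
combinatorial map on `4n` darts: `σ` rotates darts around their vertex, `α` is
the fixed-point-free edge involution, `σ * α` rotates darts around faces; the
map is connected, satisfies Euler's planarity relation `v + f = e + 2`, and all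
faces have degree `4`. -/
structure Quadrangulation (n : ℕ) where
  σ : Equiv.Perm (Fin (4 * n))
  α : Equiv.Perm (Fin (4 * n))
  root : Fin (4 * n)
  hinv : ∀ d, α (α d) = d
  hfix : ∀ d, α d ≠ d
  hconn : ∀ d : Fin (4 * n),
    d ∈ MulAction.orbit ((Subgroup.closure {σ, α}) : Subgroup (Equiv.Perm (Fin (4 * n)))) root
  heuler : permOrbits σ + permOrbits (σ * α) = permOrbits α + 2
  hquad : ∀ d : Fin (4 * n),
    Nat.card (MulAction.orbit (Subgroup.zpowers (σ * α)) d) = 4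

/-- Isomorphism of rooted maps: a relabelling of darts conjugating `σ` and `α`
and preserving the root. -/
def QuadIso {n : ℕ} (Q Q' : Quadrangulation n) : Prop :=
  ∃ ρ : Fin (4 * n) ≃ Fin (4 * n),
    (∀ d, ρ (Q.σ d) = Q'.σ (ρ d)) ∧ (∀ d, ρ (Q.α d) = Q'.α (ρ d)) ∧ ρ Q.root = Q'.root


section TutteHelpers
open PowerSeries

noncomputable def serR : PowerSeries ℚ := PowerSeries.mk fun n => (3:ℚ)^n * (catalan n : ℚ)

theorem serR_eq : serR = 1 + 3 * (X * serR^2) := by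
  ext n
  cases n with
  | zero => simp [serR]
  | succ n =>
    have h3 : (3 : PowerSeries ℚ) = C (3:ℚ) := rfl
    rw [map_add, h3, coeff_C_mul, coeff_succ_X_mul, pow_two, coeff_mul]
    simp only [serR, coeff_mk, catalan_succ', coeff_one]
    push_cast
    rw [Finset.mul_sum, Finset.mul_sum]
    simp only [zero_add]
    apply Finset.sum_congr rfl
    intro x hx
    rw [Finset.HasAntidiagonal.mem_antidiagonal] at hx
    rw [← hx]; ring

/-- Generating function of quadrangulations with a boundary of length `2p`. -/
noncomputable def serW (p : ℕ) : PowerSeries ℚ :=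
  serR^(p+1) * ((1 - 2 * (X * serR)) * (catalan p : PowerSeries ℚ) - (X * serR) * (catalan (p+1) : PowerSeries ℚ))

theorem serW_zero : serW 0 = 1 := by
  have := serR_eq
  simp only [serW, catalan_zero, zero_add, catalan_one, Nat.cast_one]
  linear_combination this

theorem cat_conv (p : ℕ) : ∑ x ∈ Finset.HasAntidiagonal.antidiagonal p, (catalan x.1 : PowerSeries ℚ) * catalan x.2 = catalan (p+1) := by
  rw [catalan_succ']; push_cast; rfl

theorem serW_rec (p : ℕ) : serW (p+1) = ∑ x ∈ Finset.HasAntidiagonal.antidiagonal p, serW x.1 * serW x.2 + X * serW (p+2) := by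
  have e0 := cat_conv p
  have e1 := cat_conv (p+1)
  have e1' := cat_conv (p+1)
  have e2 := cat_conv (p+2)
  rw [Finset.Nat.sum_antidiagonal_succ] at e1
  rw [Finset.Nat.sum_antidiagonal_succ'] at e1'
  rw [Finset.Nat.sum_antidiagonal_succ, Finset.Nat.sum_antidiagonal_succ'] at e2
  simp only [catalan_zero, Nat.cast_one, one_mul, mul_one] at e1 e1' e2
  have : ∑ x ∈ Finset.HasAntidiagonal.antidiagonal p, serW x.1 * serW x.2 =
      serR^(p+2) * ((1 - 2 * (X * serR))^2 * ∑ x ∈ Finset.HasAntidiagonal.antidiagonal p, (catalan x.1 : PowerSeries ℚ) * catalan x.2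
       - (1 - 2 * (X * serR)) * (X * serR) * ∑ x ∈ Finset.HasAntidiagonal.antidiagonal p, (catalan x.1 : PowerSeries ℚ) * catalan (x.2 + 1)
       - (1 - 2 * (X * serR)) * (X * serR) * ∑ x ∈ Finset.HasAntidiagonal.antidiagonal p, (catalan (x.1+1) : PowerSeries ℚ) * catalan x.2
       + (X * serR)^2 * ∑ x ∈ Finset.HasAntidiagonal.antidiagonal p, (catalan (x.1+1) : PowerSeries ℚ) * catalan (x.2 + 1)) := by
    rw [Finset.mul_sum, Finset.mul_sum, Finset.mul_sum, Finset.mul_sum, ← Finset.sum_sub_distrib, ← Finset.sum_sub_distrib,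
      ← Finset.sum_add_distrib, Finset.mul_sum]
    apply Finset.sum_congr rfl
    intro x hx
    rw [Finset.HasAntidiagonal.mem_antidiagonal] at hx
    rw [← hx]; simp only [serW]; ring
  rw [this, e0, eq_sub_of_add_eq' e1', eq_sub_of_add_eq' e1]
  have e3 : ∑ x ∈ Finset.HasAntidiagonal.antidiagonal p, (catalan (x.1+1) : PowerSeries ℚ) * catalan (x.2 + 1) = catalan (p+3) - 2 * catalan (p+2) := by
    linear_combination e2
  rw [e3]
  simp only [serW]
  ring

/-- The same, indexed by the boundary length. -/
noncomputable def serB (l : ℕ) : PowerSeries ℚ := if Even l then serW (l / 2) else 0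

/-- Sum over splittings. -/
def splitSum {M : Type*} [AddCommMonoid M] (f : ℕ → ℕ → M) : ℕ → M
  | 0 => 0
  | (m+1) => ∑ x ∈ Finset.HasAntidiagonal.antidiagonal m, f x.1 x.2

theorem sum_antidiagonal_even (p : ℕ) (f : ℕ → ℕ → PowerSeries ℚ)
   (hf : ∀ i j, ¬ Even i ∨ ¬ Even j → f i j = 0) :
   ∑ x ∈ Finset.HasAntidiagonal.antidiagonal (2*p), f x.1 x.2 = ∑ x ∈ Finset.HasAntidiagonal.antidiagonal p, f (2*x.1) (2*x.2) := by
  symm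
  apply Finset.sum_of_injOn (fun x => (2*x.1, 2*x.2))
  · intro x _ y _ h
    simp at h; exact Prod.ext h.1 h.2
  · intro x hx; simp at hx ⊢; omega
  · intro x hx hn
    apply hf
    by_contra! hc
    obtain ⟨⟨a, ha⟩, ⟨b, hb⟩⟩ := hc
    apply hn
    simp at hx ⊢
    exact ⟨a, b, by omega, Prod.ext (by simp; omega) (by simp; omega)⟩
  · intros; rfl

theorem serB_zero : serB 0 = 1 := by simp [serB, serW_zero]

theorem serB_rec (m : ℕ) : serB (m+1) = splitSum (fun i j => serB i * serB j) m + X * serB (m+3) := by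
  rcases Nat.even_or_odd m with h | h
  · have h1 : ¬ Even (m+1) := by simpa [Nat.even_add_one] using h
    have h3 : ¬ Even (m+3) := by simpa [Nat.even_add_one] using h
    cases m with
    | zero => simp [splitSum, serB, h3]
    | succ k =>
      simp only [splitSum]
      rw [Finset.sum_eq_zero]
      · simp [serB, h1, h3]
      · rintro ⟨i, j⟩ hx
        simp at hx
        rw [← hx] at h
        simp only [serB]
        split_ifs with a b
        · simp [Nat.even_add_one, Nat.even_add, a, b] at h
        all_goals simp
  · obtain ⟨k, rfl⟩ := h
    simp only [splitSum]
    rw [sum_antidiagonal_even k (fun i j => serB i * serB j)]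
    · have e1 : serB (2*k+1+1) = serW (k+1) := by
        rw [serB, if_pos ⟨k+1, by ring⟩]; congr 1; omega
      have e2 : serB (2*k+1+3) = serW (k+2) := by
        rw [serB, if_pos ⟨k+2, by ring⟩]; congr 1; omega
      rw [e1, e2, serW_rec]
      simp [serB]
    · rintro i j (h | h) <;> simp [serB, h]

theorem coeff_serB_four (n : ℕ) : ((n:ℚ)+3) * ((n+2) * coeff n (serB 4)) = 2 * (3^(n+1) * Nat.choose (2*(n+1)) (n+1)) := by
  have h4 : serB 4 = serW 2 := by rw [serB, if_pos ⟨2, by ring⟩]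
  have h1 := serW_rec 0
  have hR := serR_eq
  simp [serW_zero] at h1
  have h2 : 9 * (X * serW 1) = 12 * (X * serR) - serR + 1 := by
    simp only [serW, Nat.reduceAdd, catalan_one, catalan_two]
    push_cast
    linear_combination (1 + 12*X*serR) * hR
  have h3 : 9 * (X * (X * serW 2)) = 12 * (X * serR) - serR + 1 - 9 * X := by
    rw [← h2, h1]; ring
  have h5 := congrArg (coeff (n+2)) h3
  have c9 : (9 : PowerSeries ℚ) = C (9:ℚ) := rfl
  have c12 : (12 : PowerSeries ℚ) = C (12:ℚ) := rfl
  rw [c9, c12] at h5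
  simp only [map_add, map_sub, coeff_C_mul, coeff_succ_X_mul, coeff_one, coeff_X, serR, coeff_mk] at h5
  simp at h5
  rw [h4]
  have k1 := succ_mul_catalan_eq_centralBinom (n+1)
  have k2 := succ_mul_catalan_eq_centralBinom (n+2)
  have k3 := Nat.succ_mul_centralBinom_succ (n+1)
  rw [← Nat.centralBinom_eq_two_mul_choose]
  have q1 : ((n:ℚ)+2) * catalan (n+1) = Nat.centralBinom (n+1) := by rw [← k1]; push_cast; ring
  have q2 : ((n:ℚ)+3) * catalan (n+2) = Nat.centralBinom (n+2) := by rw [← k2]; push_cast; ring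
  have q3 : ((n:ℚ)+2) * Nat.centralBinom (n+2) = 2 * (2*(n+1)+1) * Nat.centralBinom (n+1) := by
    exact_mod_cast k3
  rw [← q1]
  have q4 : ((n:ℚ)+3) * catalan (n+2) = 2 * (2*(n+1)+1) * catalan (n+1) := by
    have : ((n:ℚ)+2) ≠ 0 := by positivity
    apply mul_left_cancel₀ this
    rw [q2, q3, ← q1]; ring
  have h6 : coeff n (serW 2) = (12 * (3^(n+1) * catalan (n+1)) - 3^(n+2) * catalan (n+2)) / 9 := by
    rw [← h5]; ring
  rw [h6]
  linear_combination (-(3:ℚ)^n * (n+2)) * q4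

/-! ### Word decompositions of permutations -/

/-- `L` lists the cycles of `φ` as cyclic words. -/
structure Dec {D : Type*} (φ : Equiv.Perm D) (L : List (List D)) : Prop where
  ne : ∀ w ∈ L, w ≠ []
  rot : ∀ w ∈ L, w.map φ = w.rotate 1
  nodup : L.flatten.Nodup
  cover : ∀ x, x ∈ L.flatten

theorem Dec.perm {D : Type*} {φ : Equiv.Perm D} {L L' : List (List D)} (h : Dec φ L) (p : L.Perm L') :
    Dec φ L' :=
  ⟨fun w hw => h.ne w (p.mem_iff.2 hw), fun w hw => h.rot w (p.mem_iff.2 hw),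
    p.flatten.nodup_iff.1 h.nodup, fun x => p.flatten.mem_iff.1 (h.cover x)⟩

theorem Dec.rotate {D : Type*} {φ : Equiv.Perm D} {L : List (List D)} {a b : List D} {r : D}
    (h : Dec φ ((a ++ r :: b) :: L)) : Dec φ ((r :: (b ++ a)) :: L) := by
  have p : ((a ++ r :: b) :: L).flatten.Perm ((r :: (b ++ a)) :: L).flatten := by
    simp only [List.flatten_cons]
    apply List.Perm.append_right
    exact List.perm_append_comm
  refine ⟨?_, ?_, p.nodup_iff.1 h.nodup, fun x => p.mem_iff.1 (h.cover x)⟩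
  · intro w hw
    rcases List.mem_cons.1 hw with rfl | hw
    · simp
    · exact h.ne w (List.mem_cons_of_mem _ hw)
  · intro w hw
    rcases List.mem_cons.1 hw with rfl | hw
    · have h1 := h.rot _ List.mem_cons_self
      have h2 : r :: (b ++ a) = (a ++ r :: b).rotate a.length := by
        rw [List.rotate_append_length_eq]; rfl
      rw [h2, List.map_rotate, h1, List.rotate_rotate, List.rotate_rotate, Nat.add_comm]
    · exact h.rot w (List.mem_cons_of_mem _ hw)

theorem map_mul_swap {D : Type*} [DecidableEq D] (φ : Equiv.Perm D) {r s : D} {w : List D} (hr : r ∉ w) (hs : s ∉ w) :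
    w.map (φ * Equiv.swap r s) = w.map φ := by
  apply List.map_congr_left
  intro x hx
  rw [Equiv.Perm.mul_apply, Equiv.swap_apply_of_ne_of_ne]
  · rintro rfl; exact hr hx
  · rintro rfl; exact hs hx

theorem Dec.split {D : Type*} [DecidableEq D] {φ : Equiv.Perm D} {L : List (List D)} {a b : List D} {r s : D}
    (h : Dec φ ((r :: (a ++ s :: b)) :: L)) :
    Dec (φ * Equiv.swap r s) ((s :: a) :: (r :: b) :: L) := by
  have p : ((r :: (a ++ s :: b)) :: L).flatten.Perm ((s :: a) :: (r :: b) :: L).flatten := by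
    simp only [List.flatten_cons, List.cons_append, List.append_assoc]
    grind
  have hn := h.nodup
  have h1 := h.rot _ List.mem_cons_self
  simp only [List.flatten_cons, List.cons_append, List.append_assoc, List.nodup_cons, List.nodup_append,
    List.mem_append, List.mem_cons] at hn
  refine ⟨?_, ?_, p.nodup_iff.1 h.nodup, fun x => p.mem_iff.1 (h.cover x)⟩
  · intro w hw
    have := h.ne w
    simp at hw this
    rcases hw with rfl | rfl | hw
    · simp
    · simp
    · exact this (Or.inr hw)
  · have hra : r ∉ a := by grind
    have hsa : s ∉ a := by grind
    have hrb : r ∉ b := by grind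
    have hsb : s ∉ b := by grind
    have h2 : (φ r :: a.map φ) ++ (φ s :: b.map φ) = (a ++ [s]) ++ (b ++ [r]) := by
      simpa using h1
    obtain ⟨h3, h4⟩ := List.append_inj h2 (by simp)
    intro w hw
    simp only [List.mem_cons] at hw
    rcases hw with rfl | rfl | hw
    · rw [List.map_cons, map_mul_swap φ hra hsa]
      simpa using h3
    · rw [List.map_cons, map_mul_swap φ hrb hsb]
      simpa using h4
    · rw [map_mul_swap φ, h.rot w (List.mem_cons_of_mem _ hw)]
      · intro hr
        exact hn.1 (Or.inr (Or.inr (Or.inr (List.mem_flatten.2 ⟨w, hw, hr⟩))))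
      · intro hr
        exact hn.2.2.1.1 (Or.inr (List.mem_flatten.2 ⟨w, hw, hr⟩))

theorem Dec.merge {D : Type*} [DecidableEq D] {φ : Equiv.Perm D} {L : List (List D)} {a b : List D} {r s : D}
    (h : Dec φ ((r :: a) :: (s :: b) :: L)) :
    Dec (φ * Equiv.swap r s) ((r :: (b ++ s :: a)) :: L) := by
  have p : ((r :: a) :: (s :: b) :: L).flatten.Perm ((r :: (b ++ s :: a)) :: L).flatten := by
    simp only [List.flatten_cons, List.cons_append, List.append_assoc]
    grind
  have hn := h.nodup
  have h1 := h.rot _ List.mem_cons_self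
  have h2 := h.rot _ (List.mem_cons_of_mem _ List.mem_cons_self)
  simp only [List.flatten_cons, List.cons_append, List.append_assoc, List.nodup_cons, List.nodup_append,
    List.mem_append, List.mem_cons] at hn
  refine ⟨?_, ?_, p.nodup_iff.1 h.nodup, fun x => p.mem_iff.1 (h.cover x)⟩
  · intro w hw
    have := h.ne w
    simp at hw this
    rcases hw with rfl | hw
    · simp
    · exact this (Or.inr (Or.inr hw))
  · have hra : r ∉ a := by grind
    have hsa : s ∉ a := by grind
    have hrb : r ∉ b := by grind
    have hsb : s ∉ b := by grind
    intro w hw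
    simp only [List.mem_cons] at hw
    rcases hw with rfl | hw
    · rw [List.map_cons, List.map_append, List.map_cons, map_mul_swap φ hra hsa, map_mul_swap φ hrb hsb]
      simp at h1 h2 ⊢
      rw [h1, ← List.cons_append, h2]
      simp
    · rw [map_mul_swap φ, h.rot w (List.mem_cons_of_mem _ (List.mem_cons_of_mem _ hw))]
      · intro hr
        exact hn.1 (Or.inr (Or.inr (Or.inr (List.mem_flatten.2 ⟨w, hw, hr⟩))))
      · intro hr
        exact hn.2.2.1.1 (Or.inr (List.mem_flatten.2 ⟨w, hw, hr⟩))

theorem word_pow {D : Type*} (φ : Equiv.Perm D) (z : D) (t : List D) : ∀ h, (h :: t).map φ = t ++ [z] →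
    ∀ x ∈ h :: t, φ.SameCycle h x := by
  induction t with
  | nil => intro h _ x hx; simp at hx; subst hx; rfl
  | cons c t ih =>
    intro h hh x hx
    simp at hh
    rcases List.mem_cons.1 hx with rfl | hx
    · rfl
    · have := ih c (by simpa using hh.2) x hx
      rw [← hh.1] at this
      exact Equiv.Perm.sameCycle_apply_left.1 this

theorem Dec.sameCycle {D : Type*} {φ : Equiv.Perm D} {L : List (List D)} (hd : Dec φ L) {w : List D} (hw : w ∈ L)
    {x y : D} (hx : x ∈ w) (hy : y ∈ w) : φ.SameCycle x y := by
  have h1 := hd.rot w hw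
  cases w with
  | nil => simp at hx
  | cons h t =>
    have := word_pow φ h t h (by simpa using h1)
    exact (this x hx).symm.trans (this y hy)

theorem Dec.apply_mem {D : Type*} {φ : Equiv.Perm D} {L : List (List D)} (hd : Dec φ L) {w : List D} (hw : w ∈ L)
    {x : D} : φ x ∈ w ↔ x ∈ w := by
  have h1 := hd.rot w hw
  have : φ x ∈ w.map φ ↔ x ∈ w := by simp
  rw [← this, h1, List.mem_rotate]

theorem Dec.mem_of_sameCycle {D : Type*} {φ : Equiv.Perm D} {L : List (List D)} (hd : Dec φ L) {w : List D} (hw : w ∈ L)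
    {x y : D} (hx : x ∈ w) (h : φ.SameCycle x y) : y ∈ w := by
  obtain ⟨i, rfl⟩ := h
  have : ∀ i : ℤ, ∀ x, (φ ^ i) x ∈ w ↔ x ∈ w := by
    intro i
    induction i with
    | zero => simp
    | succ i ih => intro x; rw [zpow_add_one, Equiv.Perm.mul_apply, ih, hd.apply_mem hw]
    | pred i ih => intro x; rw [zpow_sub_one, Equiv.Perm.mul_apply, ih, ← hd.apply_mem hw]; simp
  exact (this i x).2 hx

theorem orbitRel_iff {D : Type*} (φ : Equiv.Perm D) (x y : D) :
    MulAction.orbitRel (Subgroup.zpowers φ) D x y ↔ φ.SameCycle y x := by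
  rw [MulAction.orbitRel_apply, MulAction.mem_orbit_iff]
  constructor
  · rintro ⟨⟨g, hg⟩, h⟩
    obtain ⟨i, rfl⟩ := Subgroup.mem_zpowers_iff.1 hg
    exact ⟨i, h⟩
  · rintro ⟨i, h⟩
    exact ⟨⟨φ ^ i, Subgroup.zpow_mem_zpowers φ i⟩, h⟩

theorem Dec.permOrbits {D : Type*} [Fintype D] {φ : Equiv.Perm D} {L : List (List D)} (hd : Dec φ L) :
    permOrbits φ = L.length := by
  have hp := (List.nodup_flatten.1 hd.nodup).2
  have key : Function.Bijective (fun i : Fin L.length =>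
      (Quotient.mk (MulAction.orbitRel (Subgroup.zpowers φ) D) ((L.get i).head (hd.ne _ (L.get_mem i))))) := by
    constructor
    · intro i j hij
      have h1 := (orbitRel_iff φ _ _).1 (Quotient.exact hij)
      have h2 := hd.mem_of_sameCycle (L.get_mem j) (List.head_mem _) h1
      by_contra hne
      have hh := List.head_mem (hd.ne _ (L.get_mem i))
      have hp' := List.pairwise_iff_get.1 hp
      rcases lt_or_gt_of_ne hne with hlt | hlt
      · exact hp' i j hlt hh h2
      · exact hp' j i hlt h2 hh
    · intro q
      induction q using Quotient.inductionOn with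
      | h x =>
      obtain ⟨w, hw, hx⟩ := List.mem_flatten.1 (hd.cover x)
      obtain ⟨i, rfl⟩ := List.get_of_mem hw
      refine ⟨i, Quotient.sound ?_⟩
      exact (orbitRel_iff φ _ _).2 (hd.sameCycle hw hx (List.head_mem _))
  unfold _root_.permOrbits
  rw [← Nat.card_eq_of_bijective _ key]
  simp

/-! ### Gluings -/

/-- Everything is reachable from the marked letters `M`. -/
def Conn {D : Type*} (φ α : Equiv.Perm D) (M : List D) : Prop :=
  ∀ X : Set D, (∀ x ∈ M, x ∈ X) → (∀ x, φ x ∈ X ↔ x ∈ X) → (∀ x, x ∈ X → α x ∈ X) → ∀ x, x ∈ X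

theorem conn_congr {D : Type*} {φ α : Equiv.Perm D} {M M' : List D} (h : ∀ x, x ∈ M ↔ x ∈ M') :
    Conn φ α M ↔ Conn φ α M' := by
  simp only [Conn, h]

/-- `α` is an involution with set of non-fixed points `S`. -/
def IsInv {D : Type*} (S : Finset D) (α : Equiv.Perm D) : Prop :=
  (∀ x, α (α x) = x) ∧ ∀ x, α x ≠ x ↔ x ∈ S

theorem isInv_swap {D : Type*} [DecidableEq D] {S : Finset D} {r s : D} (hr : r ∈ S) (hs : s ∈ S) (hne : r ≠ s)
    (α : Equiv.Perm D) :
    (IsInv S α ∧ α r = s) ↔ IsInv ((S.erase r).erase s) (Equiv.swap r s * α) := by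
  constructor
  · rintro ⟨⟨h1, h2⟩, h3⟩
    have h4 : α s = r := by rw [← h3, h1]
    have key : ∀ x, x ≠ r → x ≠ s → Equiv.swap r s (α x) = α x := by
      intro x hx hx'
      apply Equiv.swap_apply_of_ne_of_ne
      · rw [← h4]; exact fun h => hx' (α.injective h)
      · rw [← h3]; exact fun h => hx (α.injective h)
    have kr : Equiv.swap r s (α r) = r := by rw [h3, Equiv.swap_apply_right]
    have ks : Equiv.swap r s (α s) = s := by rw [h4, Equiv.swap_apply_left]
    have key2 : ∀ x, x ≠ r → x ≠ s → α x ≠ r ∧ α x ≠ s := by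
      intro x hx hx'
      constructor
      · rw [← h4]; exact fun h => hx' (α.injective h)
      · rw [← h3]; exact fun h => hx (α.injective h)
    refine ⟨fun x => ?_, fun x => ?_⟩
    · simp only [Equiv.Perm.mul_apply]
      by_cases e1 : x = r
      · subst e1; rw [kr, kr]
      by_cases e2 : x = s
      · subst e2; rw [ks, ks]
      rw [key x e1 e2, key _ (key2 x e1 e2).1 (key2 x e1 e2).2, h1]
    · simp only [Equiv.Perm.mul_apply, Finset.mem_erase]
      by_cases e1 : x = r
      · subst e1; simp [kr]
      by_cases e2 : x = s
      · subst e2; simp [ks]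
      rw [key x e1 e2, h2]
      simp [e1, e2]
  · rintro ⟨h1, h2⟩
    simp only [Equiv.Perm.mul_apply] at h1 h2
    have kr : Equiv.swap r s (α r) = r := by
      by_contra h; have := (h2 r).1 h; simp at this
    have ks : Equiv.swap r s (α s) = s := by
      by_contra h; have := (h2 s).1 h; simp at this
    have h3 : α r = s := by
      have := congrArg (Equiv.swap r s) kr; simpa using this
    have h4 : α s = r := by
      have := congrArg (Equiv.swap r s) ks; simpa using this
    have key2 : ∀ x, x ≠ r → x ≠ s → α x ≠ r ∧ α x ≠ s := by
      intro x hx hx'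
      constructor
      · rw [← h4]; exact fun h => hx' (α.injective h)
      · rw [← h3]; exact fun h => hx (α.injective h)
    have key : ∀ x, x ≠ r → x ≠ s → Equiv.swap r s (α x) = α x := by
      intro x hx hx'
      exact Equiv.swap_apply_of_ne_of_ne (key2 x hx hx').1 (key2 x hx hx').2
    refine ⟨⟨fun x => ?_, fun x => ?_⟩, h3⟩
    · by_cases e1 : x = r
      · subst e1; rw [h3, h4]
      by_cases e2 : x = s
      · subst e2; rw [h4, h3]
      have := h1 x
      rwa [key x e1 e2, key _ (key2 x e1 e2).1 (key2 x e1 e2).2] at this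
    · by_cases e1 : x = r
      · subst e1; simp [h3, hr, hne.symm]
      by_cases e2 : x = s
      · subst e2; simp [h4, hs, hne]
      have := h2 x
      rw [key x e1 e2] at this
      simpa [e1, e2] using this

theorem conn_swap {D : Type*} [DecidableEq D] {φ α : Equiv.Perm D} {r s : D} {M M' : List D}
    (hr : r ∈ M) (hs : s ∈ M') (hM : ∀ x ∈ M, x ∈ M')
    (hM' : ∀ X : Set D, (∀ x ∈ M, x ∈ X) → (∀ x, φ x ∈ X ↔ x ∈ X) → s ∈ X → ∀ x ∈ M', x ∈ X)
    (hα : α r = s) :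
    Conn φ α M ↔ Conn (φ * Equiv.swap r s) (Equiv.swap r s * α) M' := by
  have hsw : ∀ X : Set D, r ∈ X → s ∈ X → ∀ x, Equiv.swap r s x ∈ X ↔ x ∈ X := by
    intro X h1 h2 x
    by_cases e1 : x = r
    · subst e1; simp [h1, h2]
    by_cases e2 : x = s
    · subst e2; simp [h1, h2]
    rw [Equiv.swap_apply_of_ne_of_ne e1 e2]
  constructor
  · intro h X h1 h2 h3
    have k := hsw X (h1 _ (hM _ hr)) (h1 _ hs)
    refine h X (fun x hx => h1 x (hM x hx)) (fun x => ?_) (fun x hx => ?_)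
    · have := h2 (Equiv.swap r s x)
      rw [k] at this
      simpa using this
    · exact (k _).1 (h3 x hx)
  · intro h X h1 h2 h3
    have hsX : s ∈ X := hα ▸ h3 r (h1 r hr)
    have k := hsw X (h1 _ hr) hsX
    refine h X (hM' X h1 h2 hsX) (fun x => ?_) (fun x hx => ?_)
    · rw [Equiv.Perm.mul_apply, h2, k]
    · exact (k _).2 (h3 x hx)

theorem Dec.pick {D : Type*} {φ : Equiv.Perm D} {L U : List (List D)} (h : Dec φ (L ++ U)) {r : D}
    (hr : r ∈ L.flatten) :
    ∃ a L', Dec φ (((r :: a) :: L') ++ U) ∧ L.flatten.Perm ((r :: a) :: L').flatten ∧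
      ∀ p : D → Bool, (L.map (List.countP p)).Perm (((r :: a) :: L').map (List.countP p)) := by
  obtain ⟨w, hw, hrw⟩ := List.mem_flatten.1 hr
  obtain ⟨L1, L2, rfl⟩ := List.append_of_mem hw
  obtain ⟨a, b, rfl⟩ := List.append_of_mem hrw
  have p1 : (L1 ++ (a ++ r :: b) :: L2).Perm ((a ++ r :: b) :: (L1 ++ L2)) := List.perm_middle
  have p2 : (a ++ r :: b).Perm (r :: (b ++ a)) := List.perm_append_comm
  refine ⟨b ++ a, L1 ++ L2, ?_, ?_, ?_⟩
  · have := h.perm (p1.append_right U)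
    exact Dec.rotate this
  · refine p1.flatten.trans ?_
    simp only [List.flatten_cons]
    exact p2.append_right _
  · intro p
    refine (p1.map _).trans ?_
    simp only [List.map_cons]
    rw [p2.countP_eq p]

theorem Dec.mem_iff_left {D : Type*} {φ : Equiv.Perm D} {L U : List (List D)} (h : Dec φ (L ++ U)) (x : D) :
    φ x ∈ L.flatten ↔ x ∈ L.flatten := by
  simp only [List.mem_flatten]
  constructor
  · rintro ⟨w, hw, hx⟩
    exact ⟨w, hw, (h.apply_mem (List.mem_append_left _ hw)).1 hx⟩
  · rintro ⟨w, hw, hx⟩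
    exact ⟨w, hw, (h.apply_mem (List.mem_append_left _ hw)).2 hx⟩

theorem dead_case {D : Type*} {φ α : Equiv.Perm D} {L U : List (List D)} {S : Finset D} (h : Dec φ (L ++ U))
    (hdead : ∀ r ∈ L.flatten, r ∉ S) (hα : IsInv S α) (hc : Conn φ α L.flatten) :
    U = [] ∧ S = ∅ ∧ α = 1 := by
  have hall : ∀ x, x ∈ L.flatten := by
    refine hc {x | x ∈ L.flatten} (fun x hx => hx) (h.mem_iff_left) (fun x hx => ?_)
    have : α x = x := by
      by_contra hne
      exact hdead x hx ((hα.2 x).1 hne)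
    simpa [this] using hx
  have hS : S = ∅ := Finset.eq_empty_of_forall_notMem fun x => hdead x (hall x)
  refine ⟨?_, hS, ?_⟩
  · cases U with
    | nil => rfl
    | cons w U =>
      exfalso
      obtain ⟨x, hx⟩ := List.exists_mem_of_ne_nil w (h.ne w (by simp))
      have := h.nodup
      rw [List.flatten_append, List.nodup_append] at this
      exact this.2.2 x (hall x) x (by simp [hx]) rfl
  · ext x
    by_contra hne
    exact hdead x (hall x) ((hα.2 x).1 hne)

theorem card_erase_two {D : Type*} [DecidableEq D] {S : Finset D} {r s : D} (hr : r ∈ S) (hs : s ∈ S) (hne : r ≠ s) :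
    ((S.erase r).erase s).card + 2 = S.card := by
  have h1 := Finset.card_erase_add_one hr
  have h2 := Finset.card_erase_add_one (Finset.mem_erase.2 ⟨hne.symm, hs⟩)
  omega

theorem swap_move {D : Type*} [DecidableEq D] (φ α : Equiv.Perm D) (r s : D) :
    (φ * Equiv.swap r s) * (Equiv.swap r s * α) = φ * α := by
  rw [mul_assoc, ← mul_assoc (Equiv.swap r s), Equiv.swap_mul_self, one_mul]

/-- Three cases: merging with another word of `U` / `L`. -/
theorem Dec.merge_pick {D : Type*} [DecidableEq D] {φ : Equiv.Perm D} {L U : List (List D)} {a : List D} {r s : D}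
    (h : Dec φ ((r :: a) :: (L ++ U))) (hs : s ∈ L.flatten) :
    ∃ b L', Dec (φ * Equiv.swap r s) ((r :: (b ++ s :: a)) :: (L' ++ U)) ∧ L.flatten.Perm ((s :: b) :: L').flatten ∧
      (∀ p : D → Bool, (L.map (List.countP p)).Perm (((s :: b) :: L').map (List.countP p))) ∧
      ∀ x ∈ b, φ.SameCycle s x := by
  have h1 : Dec φ (L ++ ((r :: a) :: U)) := h.perm List.perm_middle.symm
  obtain ⟨b, L', h2, h3, h4⟩ := h1.pick hs
  refine ⟨b, L', ?_, h3, h4, fun x hx => h2.sameCycle (w := s :: b) (by simp) (by simp) (by simp [hx])⟩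
  apply Dec.merge
  exact h2.perm (List.perm_middle (l₁ := (s :: b) :: L'))

theorem closed_sameCycle {D : Type*} {φ : Equiv.Perm D} {X : Set D} (h : ∀ x, φ x ∈ X ↔ x ∈ X) {x y : D}
    (hx : x ∈ X) (hxy : φ.SameCycle x y) : y ∈ X := by
  obtain ⟨i, rfl⟩ := hxy
  have : ∀ i : ℤ, ∀ x, (φ ^ i) x ∈ X ↔ x ∈ X := by
    intro i
    induction i with
    | zero => simp
    | succ i ih => intro x; rw [zpow_add_one, Equiv.Perm.mul_apply, ih, h]
    | pred i ih => intro x; rw [zpow_sub_one, Equiv.Perm.mul_apply, ih, ← h]; simp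
  exact (this i x).2 hx

theorem conn_split {D : Type*} [DecidableEq D] {φ α : Equiv.Perm D} {r s : D} {a b : List D} {L : List (List D)}
    (hs : α r = s) : Conn φ α ((r :: (a ++ s :: b)) :: L).flatten ↔
      Conn (φ * Equiv.swap r s) (Equiv.swap r s * α) ((s :: a) :: (r :: b) :: L).flatten := by
  refine conn_swap ?_ ?_ ?_ ?_ hs
  · simp
  · simp
  · intro x; simp; tauto
  · intro X h1 _ _ x hx
    apply h1
    revert hx
    simp; tauto

theorem conn_merge {D : Type*} [DecidableEq D] {φ α : Equiv.Perm D} {r s : D} {a b : List D} {L : List (List D)}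
    (hsc : ∀ x ∈ b, φ.SameCycle s x) (hs : α r = s) : Conn φ α ((r :: a) :: L).flatten ↔
      Conn (φ * Equiv.swap r s) (Equiv.swap r s * α) ((r :: (b ++ s :: a)) :: L).flatten := by
  refine conn_swap ?_ ?_ ?_ ?_ hs
  · simp
  · simp
  · intro x; simp; tauto
  · intro X h1 h2 hsX x hx
    have h1' := h1 x
    simp at hx h1'
    rcases hx with rfl | hx | rfl | hx | hx
    · exact h1' (Or.inl rfl)
    · exact closed_sameCycle h2 hsX (hsc x hx)
    · exact hsX
    · exact h1' (Or.inr (Or.inl hx))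
    · exact h1' (Or.inr (Or.inr hx))

theorem genus {D : Type*} [Fintype D] [DecidableEq D] (N : ℕ) : ∀ (φ α : Equiv.Perm D) (L U : List (List D)) (S : Finset D),
    S.card ≤ N → Dec φ (L ++ U) → IsInv S α → Conn φ α L.flatten →
    2 * permOrbits (φ * α) + 2 * U.length ≤ S.card + 2 * L.length := by
  induction N using Nat.strong_induction_on with
  | _ N ih =>
  intro φ α L U S hN hd hα hc
  by_cases hlive : ∃ r ∈ L.flatten, r ∈ S
  · obtain ⟨r, hrL, hrS⟩ := hlive
    obtain ⟨a, L', hd1, hp, hcnt⟩ := hd.pick hrL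
    have hlen : L.length = L'.length + 1 := by
      have := (hcnt (fun _ => true)).length_eq
      simpa using this
    rw [conn_congr (fun x => hp.mem_iff)] at hc
    have hne : r ≠ α r := ((hα.2 r).2 hrS).symm
    have hsS : α r ∈ S := by
      rw [← hα.2, hα.1]; exact hne
    obtain ⟨s, hs⟩ : ∃ s, α r = s := ⟨_, rfl⟩
    rw [hs] at hne hsS
    have hcard := card_erase_two hrS hsS hne
    have hinv := (isInv_swap hrS hsS hne α).1 ⟨hα, hs⟩
    have hcov := hd1.cover s
    simp only [List.cons_append, List.flatten_cons, List.flatten_append, List.mem_cons, List.mem_append, hne.symm, false_or] at hcov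
    rw [← swap_move φ α r s]
    rcases hcov with hs1 | hs1 | hs1
    · obtain ⟨a1, b, rfl⟩ := List.append_of_mem hs1
      have hd2 := Dec.split hd1
      have hc2 : Conn (φ * Equiv.swap r s) (Equiv.swap r s * α) ((s :: a1) :: (r :: b) :: L').flatten := (conn_split hs).1 hc
      have := ih _ (by omega) _ _ ((s :: a1) :: (r :: b) :: L') U _ le_rfl hd2 hinv hc2
      simp only [List.length_cons] at this
      omega
    · obtain ⟨b, L'', hd2, hp2, hcnt2, hsc⟩ := Dec.merge_pick hd1 hs1
      have hlen2 : L'.length = L''.length + 1 := by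
        have := (hcnt2 (fun _ => true)).length_eq
        simpa using this
      have hm : ∀ x, x ∈ L'.flatten ↔ x ∈ ((s :: b) :: L'').flatten := fun x => hp2.mem_iff
      have hc2 : Conn (φ * Equiv.swap r s) (Equiv.swap r s * α) ((r :: (b ++ s :: a)) :: L'').flatten := by
        refine (conn_swap (M := ((r :: a) :: L').flatten) ?_ ?_ ?_ ?_ hs).1 hc
        · simp
        · simp
        · intro x; rw [List.flatten_cons, List.mem_append, hm]; simp; tauto
        · intro X h1 _ _ x hx
          apply h1
          revert hx
          rw [List.flatten_cons, List.mem_append, List.flatten_cons, List.mem_append, hm]; simp; tauto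
      have := ih _ (by omega) _ _ ((r :: (b ++ s :: a)) :: L'') U _ le_rfl hd2 hinv hc2
      simp only [List.length_cons] at this
      omega
    · obtain ⟨b, U', hd2, hp2, hcnt2, hsc⟩ := Dec.merge_pick (hd1.perm (L' := (r :: a) :: (U ++ L'))
        (by simpa using List.perm_append_comm)) hs1
      have hlen2 : U.length = U'.length + 1 := by
        have := (hcnt2 (fun _ => true)).length_eq
        simpa using this
      have hc2 : Conn (φ * Equiv.swap r s) (Equiv.swap r s * α) ((r :: (b ++ s :: a)) :: L').flatten :=
        (conn_merge hsc hs).1 hc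
      have := ih _ (by omega) _ _ ((r :: (b ++ s :: a)) :: L') U' _ le_rfl (hd2.perm (by simpa using List.perm_append_comm)) hinv hc2
      simp only [List.length_cons] at this
      omega
  · push Not at hlive
    obtain ⟨rfl, rfl, rfl⟩ := dead_case hd hlive hα hc
    rw [List.append_nil] at hd
    simp [hd.permOrbits]

/-! ### Counting planar gluings -/

/-- Planar gluings in which every component contains exactly one marked word. -/
def Good {D : Type*} [Fintype D] (φ : Equiv.Perm D) (L : List (List D)) (n : ℕ) (S : Finset D) (α : Equiv.Perm D) : Prop :=
  IsInv S α ∧ Conn φ α L.flatten ∧ 2 * permOrbits (φ * α) + 2 * n = S.card + 2 * L.length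

open Classical in
/-- The number of planar gluings. -/
noncomputable def cnt {D : Type*} [Fintype D] [DecidableEq D] (φ : Equiv.Perm D) (L : List (List D)) (n : ℕ) (S : Finset D) : ℕ :=
  (Finset.univ.filter (Good φ L n S)).card

open Classical in
/-- The number of planar gluings with `r` glued to `s`. -/
noncomputable def cntAt {D : Type*} [Fintype D] [DecidableEq D] (φ : Equiv.Perm D) (L : List (List D)) (n : ℕ) (S : Finset D) (r s : D) : ℕ :=
  (Finset.univ.filter (fun α => Good φ L n S α ∧ α r = s)).card

/-- Number of live letters. -/
def live {D : Type*} [DecidableEq D] (S : Finset D) (w : List D) : ℕ := w.countP (fun x => decide (x ∈ S))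

theorem cnt_eq_sum {D : Type*} [Fintype D] [DecidableEq D] (φ : Equiv.Perm D) (L : List (List D)) (n : ℕ) (S : Finset D) (r : D) :
    cnt φ L n S = ∑ s, cntAt φ L n S r s := by
  classical
  unfold cnt cntAt
  rw [Finset.card_eq_sum_card_fiberwise (f := fun α : Equiv.Perm D => α r) (t := Finset.univ) (by intro x _; simp)]
  simp only [Finset.filter_filter]

theorem cntAt_eq_zero {D : Type*} [Fintype D] [DecidableEq D] {φ : Equiv.Perm D} {L : List (List D)} {n : ℕ} {S : Finset D} {r s : D}
    (h : ∀ α, Good φ L n S α → α r = s → False) : cntAt φ L n S r s = 0 := by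
  classical
  unfold cntAt
  rw [Finset.card_eq_zero, Finset.filter_eq_empty_iff]
  intro α _ hh
  exact h α hh.1 hh.2

theorem cntAt_step {D : Type*} [Fintype D] [DecidableEq D] {φ : Equiv.Perm D} {L L₂ : List (List D)} {n n₂ : ℕ}
    {S : Finset D} {r s : D} (hr : r ∈ S) (hs : s ∈ S) (hne : r ≠ s)
    (hlen : L.length + 1 + n₂ = L₂.length + n)
    (hc : ∀ α : Equiv.Perm D, α r = s → (Conn φ α L.flatten ↔
      Conn (φ * Equiv.swap r s) (Equiv.swap r s * α) L₂.flatten)) :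
    cntAt φ L n S r s = cnt (φ * Equiv.swap r s) L₂ n₂ ((S.erase r).erase s) := by
  classical
  unfold cntAt cnt
  apply Finset.card_equiv (Equiv.mulLeft (Equiv.swap r s))
  intro α
  have hcard := card_erase_two hr hs hne
  rw [Finset.mem_filter, Finset.mem_filter]
  simp only [Finset.mem_univ, true_and, Equiv.coe_mulLeft, Good, swap_move]
  have h1 := isInv_swap hr hs hne α
  rw [← h1]
  constructor
  · rintro ⟨⟨a, b, c⟩, d⟩
    exact ⟨⟨a, d⟩, (hc α d).1 b, by omega⟩
  · rintro ⟨⟨a, d⟩, b, c⟩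
    exact ⟨⟨a, (hc α d).2 b, by omega⟩, d⟩

theorem list_split_sum {D : Type*} {M : Type*} [AddCommMonoid M] (p : D → Bool) (a : List D) :
    ∀ (f : ℕ → ℕ → M) (h : D → M),
    (∀ a1 s b, a = a1 ++ s :: b → h s = if p s then f (a1.countP p) (b.countP p) else 0) →
    (a.map h).sum = splitSum f (a.countP p) := by
  induction a with
  | nil => intro f h _; simp [splitSum]
  | cons c a ih =>
    intro f h hh
    have h0 := hh [] c a rfl
    rw [List.map_cons, List.sum_cons, h0]
    by_cases hc : p c
    · rw [List.countP_cons_of_pos hc]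
      rw [ih (fun i j => f (i+1) j) h]
      · simp only [hc, if_true, splitSum, List.countP_nil]
        cases a.countP p with
        | zero => simp [splitSum]
        | succ m => rw [Finset.Nat.sum_antidiagonal_succ]
      · intro a1 s b hab
        rw [hh (c :: a1) s b (by simp [hab]), List.countP_cons_of_pos hc]
    · rw [List.countP_cons_of_neg hc, ih f h]
      · simp [hc]
      · intro a1 s b hab
        rw [hh (c :: a1) s b (by simp [hab]), List.countP_cons_of_neg hc]

theorem list_const_sum {D : Type*} {M : Type*} [AddCommMonoid M] (p : D → Bool) (a : List D)
    (K : M) (h : D → M) (hh : ∀ s ∈ a, h s = if p s then K else 0) :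
    (a.map h).sum = a.countP p • K := by
  induction a with
  | nil => simp
  | cons c a ih =>
    rw [List.map_cons, List.sum_cons, hh c (by simp), ih (fun s hs => hh s (by simp [hs]))]
    by_cases hc : p c
    · rw [List.countP_cons_of_pos hc, if_pos hc, succ_nsmul, add_comm]
    · rw [List.countP_cons_of_neg hc, if_neg hc, zero_add]

theorem live_erase {D : Type*} [DecidableEq D] {S : Finset D} {r s : D} {w : List D} (hr : r ∉ w) (hs : s ∉ w) :
    live ((S.erase r).erase s) w = live S w := by
  unfold live
  apply List.countP_congr
  intro x hx
  have h1 : x ≠ r := by rintro rfl; exact hr hx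
  have h2 : x ≠ s := by rintro rfl; exact hs hx
  simp [h1, h2]

theorem live_erase_map {D : Type*} [DecidableEq D] {S : Finset D} {r s : D} {L : List (List D)} 
    (hr : r ∉ L.flatten) (hs : s ∉ L.flatten) :
    L.map (live ((S.erase r).erase s)) = L.map (live S) := by
  apply List.map_congr_left
  intro w hw
  apply live_erase
  · intro h; exact hr (List.mem_flatten.2 ⟨w, hw, h⟩)
  · intro h; exact hs (List.mem_flatten.2 ⟨w, hw, h⟩)

/-- The weight of a list of marked words. -/
noncomputable def wt {D : Type*} [DecidableEq D] (S : Finset D) (L : List (List D)) : PowerSeries ℚ :=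
  ((L.map (live S)).map serB).prod

theorem cnt_congr {D : Type*} [Fintype D] [DecidableEq D] (φ : Equiv.Perm D) {L L' : List (List D)} (n : ℕ) (S : Finset D)
   (h1 : ∀ x, x ∈ L.flatten ↔ x ∈ L'.flatten) (h2 : L.length = L'.length) : cnt φ L n S = cnt φ L' n S := by
  classical
  have h3 : ∀ α, Good φ L n S α ↔ Good φ L' n S α := by
    intro α; unfold Good; rw [h2, conn_congr h1]
  unfold cnt
  congr 1
  exact Finset.filter_congr (fun α _ => h3 α)

theorem main_count {D : Type*} [Fintype D] [DecidableEq D] (N : ℕ) : ∀ (φ : Equiv.Perm D) (L U : List (List D)) (S : Finset D),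
    S.card ≤ N → Dec φ (L ++ U) → (∀ w ∈ U, live S w = 4) →
    (cnt φ L U.length S : ℚ) = 4 ^ U.length * (U.length.factorial : ℚ) * coeff U.length (wt S L) := by
  induction N using Nat.strong_induction_on with
  | _ N ih =>
  intro φ L U S hN hd hU
  by_cases hlive : ∃ r ∈ L.flatten, r ∈ S
  · obtain ⟨r, hrL, hrS⟩ := hlive
    obtain ⟨a, L', hd1, hp, hcnt⟩ := hd.pick hrL
    have hlen : L.length = L'.length + 1 := by
      have := (hcnt (fun _ => true)).length_eq
      simpa using this
    have hwt : wt S L = wt S ((r :: a) :: L') := ((hcnt (fun x => decide (x ∈ S))).map serB).prod_eq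
    rw [cnt_congr φ (L' := (r :: a) :: L') U.length S (fun x => hp.mem_iff) (by simpa using hlen), hwt]
    have hn := hd1.nodup
    -- rewrite the sum over all darts as a sum over words
    have hsum : (cnt φ ((r :: a) :: L') U.length S : ℚ) =
        ((((r :: a) :: L') ++ U).flatten.map (fun s => (cntAt φ ((r :: a) :: L') U.length S r s : ℚ))).sum := by
      rw [cnt_eq_sum φ _ _ S r, ← List.sum_toFinset _ hn]
      push_cast
      apply Finset.sum_congr _ (fun _ _ => rfl)
      ext x; simpa using hd1.cover x
    set h : D → ℚ := fun s => (cntAt φ ((r :: a) :: L') U.length S r s : ℚ) with hh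
    have hn' := hn
    simp only [List.cons_append, List.flatten_cons, List.flatten_append, List.nodup_cons, List.nodup_append,
      List.mem_append, not_or] at hn'
    obtain ⟨⟨hra, hrL', hrU⟩, hna, ⟨hnL', hnU, hLU⟩, haLU⟩ := hn'
    have hnotS : ∀ s, s ∉ S → h s = 0 := by
      intro s hs
      simp only [hh]
      rw [cntAt_eq_zero, Nat.cast_zero]
      intro α hg hαs
      apply hs
      rw [← hαs, ← hg.1.2, hg.1.1]
      exact ((hg.1.2 r).2 hrS).symm
    have hr0 : h r = 0 := by
      simp only [hh]
      rw [cntAt_eq_zero, Nat.cast_zero]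
      intro α hg hαs
      exact (hg.1.2 r).2 hrS hαs
    -- the other marked words do not contribute
    have hL0 : ∀ s ∈ L'.flatten, h s = 0 := by
      intro s hs
      by_cases hsS : s ∈ S
      · simp only [hh]
        rw [cntAt_eq_zero, Nat.cast_zero]
        intro α hg hαs
        have hne : r ≠ s := by rintro rfl; exact hrL' hs
        obtain ⟨b, L'', hd2, hp2, hcnt2, hsc⟩ := Dec.merge_pick hd1 hs
        have hlen2 : L'.length = L''.length + 1 := by
          have := (hcnt2 (fun _ => true)).length_eq
          simpa using this
        have hm : ∀ x, x ∈ L'.flatten ↔ x ∈ ((s :: b) :: L'').flatten := fun x => hp2.mem_iff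
        have hc2 : Conn (φ * Equiv.swap r s) (Equiv.swap r s * α) ((r :: (b ++ s :: a)) :: L'').flatten := by
          refine (conn_swap (M := ((r :: a) :: L').flatten) ?_ ?_ ?_ ?_ hαs).1 hg.2.1
          · simp
          · simp
          · intro x; rw [List.flatten_cons, List.mem_append, hm]; simp; tauto
          · intro X h1 _ _ x hx
            apply h1
            revert hx
            rw [List.flatten_cons, List.mem_append, List.flatten_cons, List.mem_append, hm]; simp; tauto
        have := genus _ _ _ ((r :: (b ++ s :: a)) :: L'') U _ le_rfl hd2 ((isInv_swap hrS hsS hne α).1 ⟨hg.1, hαs⟩) hc2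
        rw [swap_move] at this
        have he := hg.2.2
        have hcard := card_erase_two hrS hsS hne
        simp only [List.length_cons] at this he
        omega
      · exact hnotS s hsS
    -- the root word
    have ha : (a.map h).sum = splitSum (fun i j => 4 ^ U.length * (U.length.factorial : ℚ) *
        coeff U.length (serB i * serB j * wt S L')) (live S a) := by
      apply list_split_sum
      rintro a1 s b rfl
      by_cases hsS : s ∈ S
      · simp only [hsS, decide_true, if_true]
        have hne : r ≠ s := by rintro rfl; simp at hra
        have hsL' : s ∉ L'.flatten := fun hx => haLU s (by simp) s (Or.inl hx) rfl
        have hsU : s ∉ U.flatten := fun hx => haLU s (by simp) s (Or.inr hx) rfl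
        have hcard := card_erase_two hrS hsS hne
        have hd2 : Dec (φ * Equiv.swap r s) (((s :: a1) :: (r :: b) :: L') ++ U) := Dec.split hd1
        simp only [hh]
        rw [cntAt_step (L₂ := (s :: a1) :: (r :: b) :: L') (n₂ := U.length) hrS hsS hne (by simp) (fun α hα => conn_split hα)]
        rw [ih _ (by omega) _ ((s :: a1) :: (r :: b) :: L') U _ le_rfl hd2]
        · congr 2
          have e1 : live ((S.erase r).erase s) (s :: a1) = live S a1 := by
            rw [← live_erase (r := r) (s := s) (w := a1)]
            · simp [live]
            · intro hx; apply hra; simp [hx]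
            · intro hx; simp [List.nodup_append] at hna; grind
          have e2 : live ((S.erase r).erase s) (r :: b) = live S b := by
            rw [← live_erase (r := r) (s := s) (w := b)]
            · simp [live]
            · intro hx; apply hra; simp [hx]
            · intro hx; simp [List.nodup_append] at hna; grind
          simp only [wt, List.map_cons, List.prod_cons, e1, e2, live_erase_map hrL' hsL']
          simp only [live]
          ring
        · intro w hw
          rw [live_erase]
          · exact hU w hw
          · intro hx; exact hrU (List.mem_flatten.2 ⟨w, hw, hx⟩)
          · intro hx; exact hsU (List.mem_flatten.2 ⟨w, hw, hx⟩)
      · simp only [hsS, decide_false]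
        rw [hnotS s hsS]; simp
    -- the unmarked words
    have hUU : ∀ s ∈ U.flatten, h s = if decide (s ∈ S) then 4 ^ (U.length - 1) * ((U.length - 1).factorial : ℚ) *
        coeff (U.length - 1) (serB (live S a + 3) * wt S L') else 0 := by
      intro s hs
      by_cases hsS : s ∈ S
      · simp only [hsS, decide_true, if_true]
        have hne : r ≠ s := by rintro rfl; exact hrU hs
        have hsL' : s ∉ L'.flatten := fun hx => hLU s hx s hs rfl
        have hsa : s ∉ a := fun hx => haLU s hx s (Or.inr hs) rfl
        have hcard := card_erase_two hrS hsS hne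
        obtain ⟨b, U', hd2, hp2, hcnt2, hsc⟩ := Dec.merge_pick (hd1.perm (L' := (r :: a) :: (U ++ L'))
          (by simpa using List.perm_append_comm)) hs
        have hlen2 : U.length = U'.length + 1 := by
          have := (hcnt2 (fun _ => true)).length_eq
          simpa using this
        have hlive' : ∀ w ∈ (s :: b) :: U', live S w = 4 := by
          intro w hw
          have h1 : live S w ∈ ((s :: b) :: U').map (live S) := List.mem_map_of_mem hw
          have h2 := (hcnt2 (fun x => decide (x ∈ S))).mem_iff.2 h1
          obtain ⟨w', hw', e⟩ := List.mem_map.1 h2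
          rw [← e]; exact hU w' hw'
        have hn2 := hp2.nodup_iff.1 hnU
        have hrU2 : r ∉ ((s :: b) :: U').flatten := fun hx => hrU (hp2.mem_iff.2 hx)
        simp only [List.flatten_cons, List.cons_append, List.nodup_cons, List.mem_append, not_or, List.mem_cons] at hn2 hrU2
        simp only [hh]
        rw [cntAt_step (L₂ := (r :: (b ++ s :: a)) :: L') (n₂ := U'.length) hrS hsS hne (by simp; omega) (fun α hα => conn_merge hsc hα)]
        rw [ih _ (by omega) _ ((r :: (b ++ s :: a)) :: L') U' _ le_rfl (hd2.perm (by simpa using List.perm_append_comm))]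
        · have hu : U.length - 1 = U'.length := by omega
          rw [hu]
          congr 2
          have e1 : live ((S.erase r).erase s) (r :: (b ++ s :: a)) = live S a + 3 := by
            have hb : live S b + 1 = 4 := by
              rw [← hlive' (s :: b) (by simp)]; simp [live, hsS]
            have hb' := live_erase (S := S) (r := r) (s := s) (w := b) hrU2.2.1 hn2.1.1
            have ha' := live_erase (S := S) (r := r) (s := s) (w := a) hra hsa
            have : live ((S.erase r).erase s) (r :: (b ++ s :: a)) = live ((S.erase r).erase s) b + live ((S.erase r).erase s) a := by
              simp [live]
            omega
          simp only [wt, List.map_cons, List.prod_cons, e1, live_erase_map hrL' hsL']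
        · intro w hw
          rw [live_erase]
          · exact hlive' w (by simp [hw])
          · intro hx; exact hrU2.2.2 (List.mem_flatten.2 ⟨w, hw, hx⟩)
          · intro hx; exact hn2.1.2 (List.mem_flatten.2 ⟨w, hw, hx⟩)
      · simp only [hsS, decide_false]
        rw [hnotS s hsS]; simp
    have hUsum := list_const_sum (fun s => decide (s ∈ S)) U.flatten _ h hUU
    have hUlive : U.flatten.countP (fun s => decide (s ∈ S)) = 4 * U.length := by
      rw [List.countP_flatten]
      have : U.map (List.countP (fun s => decide (s ∈ S))) = U.map (fun _ => 4) := List.map_congr_left hU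
      rw [this]; simp [mul_comm]
    have hLsum : (L'.flatten.map h).sum = 0 := by
      apply List.sum_eq_zero
      intro x hx
      obtain ⟨s, hs, rfl⟩ := List.mem_map.1 hx
      exact hL0 s hs
    rw [hsum]
    simp only [List.cons_append, List.flatten_cons, List.flatten_append, List.map_cons, List.map_append, List.sum_cons, List.sum_append]
    rw [hr0, ha, hLsum, hUsum, hUlive]
    have hwt2 : wt S ((r :: a) :: L') = serB (live S a + 1) * wt S L' := by
      have : live S (r :: a) = live S a + 1 := by simp [live, hrS]
      simp [wt, this]
    rw [hwt2, serB_rec (live S a)]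
    have hsplit : ∀ m, splitSum (fun i j => 4 ^ U.length * (U.length.factorial : ℚ) *
        coeff U.length (serB i * serB j * wt S L')) m = 4 ^ U.length * (U.length.factorial : ℚ) *
        coeff U.length (splitSum (fun i j => serB i * serB j) m * wt S L') := by
      intro m
      cases m with
      | zero => simp [splitSum]
      | succ m =>
        simp only [splitSum]
        rw [Finset.sum_mul, map_sum, Finset.mul_sum]
    rw [hsplit, add_mul, map_add, mul_add, mul_assoc X]
    cases U.length with
    | zero => simp
    | succ u =>
      rw [coeff_succ_X_mul, Nat.factorial_succ]
      simp only [Nat.add_sub_cancel, nsmul_eq_mul]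
      push_cast
      ring
  · push Not at hlive
    have hw1 : wt S L = 1 := by
      have : L.map (live S) = L.map (fun _ => 0) := by
        apply List.map_congr_left
        intro w hw
        unfold live
        rw [List.countP_eq_zero]
        intro x hx
        simpa using hlive x (List.mem_flatten.2 ⟨w, hw, hx⟩)
      simp [wt, this, serB_zero]
    rw [hw1, coeff_one]
    classical
    by_cases hUe : U = []
    · subst hUe
      have hS : S = ∅ := Finset.eq_empty_of_forall_notMem fun x => hlive x (by simpa using hd.cover x)
      subst hS
      rw [List.append_nil] at hd
      have : (Finset.univ.filter (Good φ L 0 ∅)) = {1} := by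
        ext α
        simp only [Finset.mem_filter, Finset.mem_univ, true_and, Finset.mem_singleton]
        constructor
        · intro hg
          exact (dead_case (U := []) (by simpa using hd) hlive hg.1 hg.2.1).2.2
        · rintro rfl
          refine ⟨⟨by simp, by simp⟩, fun X h1 _ _ x => h1 x (hd.cover x), ?_⟩
          simp [hd.permOrbits]
      simp [cnt, this]
    · have : (Finset.univ.filter (Good φ L U.length S)) = ∅ := by
        rw [Finset.filter_eq_empty_iff]
        intro α _ hg
        exact hUe (dead_case hd hlive hg.1 hg.2.1).1
      simp [cnt, this, hUe]

/-! ### Existence of word decompositions -/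

/-- The cycle of `φ` through `x`, as a word. -/
noncomputable def cword {D : Type*} (φ : Equiv.Perm D) (x : D) : List D :=
  (List.range (Function.minimalPeriod φ x)).map (fun i => φ^[i] x)

theorem minimalPeriod_perm_pos {D : Type*} [Finite D] (φ : Equiv.Perm D) (x : D) : 0 < Function.minimalPeriod φ x := by
  apply Function.minimalPeriod_pos_of_mem_periodicPts
  refine Function.mk_mem_periodicPts (orderOf_pos φ) ?_
  show φ^[orderOf φ] x = x
  rw [Equiv.Perm.iterate_eq_pow, pow_orderOf_eq_one]; rfl

theorem cword_rot {D : Type*} [Finite D] (φ : Equiv.Perm D) (x : D) : (cword φ x).map φ = (cword φ x).rotate 1 := by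
  unfold cword
  obtain ⟨m, hm⟩ := Nat.exists_eq_succ_of_ne_zero (minimalPeriod_perm_pos φ x).ne'
  have hx := Function.iterate_minimalPeriod (f := φ) (x := x)
  rw [hm] at hx ⊢
  conv_rhs => rw [Nat.succ_eq_add_one, List.range_succ_eq_map]
  rw [Nat.succ_eq_add_one, List.range_succ]
  simp only [List.map_append, List.map_cons, List.map_nil, List.map_map, List.rotate_cons_succ, List.rotate_zero]
  congr 1
  · apply List.map_congr_left; intro i _; simp [Function.iterate_succ_apply']
  · rw [← Function.iterate_succ_apply' (f := φ), hx]; rfl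

theorem mem_cword {D : Type*} [Finite D] (φ : Equiv.Perm D) (x y : D) : y ∈ cword φ x ↔ φ.SameCycle x y := by
  unfold cword
  simp only [List.mem_map, List.mem_range]
  constructor
  · rintro ⟨i, _, rfl⟩
    exact ⟨i, by rw [Equiv.Perm.iterate_eq_pow]; simp⟩
  · intro h
    obtain ⟨i, hi⟩ := h.exists_nat_pow_eq
    refine ⟨i % Function.minimalPeriod φ x, Nat.mod_lt _ (minimalPeriod_perm_pos φ x), ?_⟩
    rw [Function.iterate_mod_minimalPeriod_eq, Equiv.Perm.iterate_eq_pow, hi]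

theorem cword_nodup {D : Type*} (φ : Equiv.Perm D) (x : D) : (cword φ x).Nodup := by
  unfold cword
  apply List.Nodup.map_on _ List.nodup_range
  intro i hi j hj h
  exact Function.iterate_injOn_Iio_minimalPeriod (List.mem_range.1 hi) (List.mem_range.1 hj) h

theorem cword_length {D : Type*} (φ : Equiv.Perm D) (x : D) : (cword φ x).length = Function.minimalPeriod φ x := by
  simp [cword]

theorem exists_dec {D : Type*} [Finite D] (φ : Equiv.Perm D) :
    ∃ L, Dec φ L ∧ ∀ w ∈ L, ∃ x, w = cword φ x := by
  classical
  have := Fintype.ofFinite (Quotient (Equiv.Perm.SameCycle.setoid φ))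
  refine ⟨(Finset.univ : Finset (Quotient (Equiv.Perm.SameCycle.setoid φ))).toList.map
    (fun q => cword φ q.out), ⟨?_, ?_, ?_, ?_⟩, ?_⟩
  · intro w hw
    obtain ⟨q, _, rfl⟩ := List.mem_map.1 hw
    rw [← List.length_pos_iff, cword_length]
    exact minimalPeriod_perm_pos _ _
  · intro w hw
    obtain ⟨q, _, rfl⟩ := List.mem_map.1 hw
    exact cword_rot _ _
  · rw [List.nodup_flatten]
    constructor
    · intro w hw
      obtain ⟨q, _, rfl⟩ := List.mem_map.1 hw
      exact cword_nodup _ _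
    · rw [List.pairwise_map]
      refine (Finset.nodup_toList _).imp ?_
      intro q q' hne y hy hy'
      rw [mem_cword] at hy hy'
      apply hne
      rw [← Quotient.out_eq q, ← Quotient.out_eq q']
      exact Quotient.sound (hy.trans hy'.symm)
  · intro x
    refine List.mem_flatten.2 ⟨_, List.mem_map.2 ⟨Quotient.mk _ x, by simp, rfl⟩, ?_⟩
    rw [mem_cword]
    exact Quotient.mk_out (s := Equiv.Perm.SameCycle.setoid φ) x
  · intro w hw
    obtain ⟨q, _, rfl⟩ := List.mem_map.1 hw
    exact ⟨_, rfl⟩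

theorem length_flatten_const {D : Type*} {m : ℕ} : ∀ {L : List (List D)}, (∀ w ∈ L, w.length = m) →
    L.flatten.length = L.length * m := by
  intro L
  induction L with
  | nil => intro _; simp
  | cons w L ih =>
    intro h
    rw [List.flatten_cons, List.length_append, ih (fun v hv => h v (List.mem_cons_of_mem _ hv)), h w List.mem_cons_self,
      List.length_cons]
    ring

theorem Dec.card {D : Type*} [Fintype D] {φ : Equiv.Perm D} {L : List (List D)} (h : Dec φ L) :
    L.flatten.length = Fintype.card D := by
  classical
  rw [← List.toFinset_card_of_nodup h.nodup, ← Finset.card_univ]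
  congr 1
  ext x
  simpa using h.cover x

theorem permOrbits_mul {D : Type*} [Fintype D] (φ : Equiv.Perm D) (m : ℕ)
    (h : ∀ x, Function.minimalPeriod φ x = m) : permOrbits φ * m = Fintype.card D := by
  obtain ⟨L, hd, hL⟩ := exists_dec φ
  rw [hd.permOrbits, ← hd.card, length_flatten_const]
  intro w hw
  obtain ⟨x, rfl⟩ := hL w hw
  rw [cword_length, h]

theorem card_orbit_eq {D : Type*} [Finite D] (φ : Equiv.Perm D) (x : D) :
    Nat.card (MulAction.orbit (Subgroup.zpowers φ) x) = Function.minimalPeriod φ x := by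
  classical
  have : MulAction.orbit (Subgroup.zpowers φ) x = ((cword φ x).toFinset : Set D) := by
    ext y
    rw [← MulAction.orbitRel_apply, orbitRel_iff]
    simp [mem_cword]
  rw [this, Nat.card_coe_set_eq, Set.ncard_coe_finset, List.toFinset_card_of_nodup (cword_nodup φ x), cword_length]

theorem minimalPeriod_two {D : Type*} (α : Equiv.Perm D) (h1 : ∀ x, α (α x) = x) (h2 : ∀ x, α x ≠ x) (x : D) :
    Function.minimalPeriod α x = 2 := by
  have : Fact (Nat.Prime 2) := ⟨Nat.prime_two⟩
  exact Function.minimalPeriod_eq_prime (h1 x) (fun h => h2 x h)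

theorem permOrbits_conj {D : Type*} [Fintype D] (φ ρ : Equiv.Perm D) : permOrbits (ρ * φ * ρ⁻¹) = permOrbits φ := by
  obtain ⟨L, hd, -⟩ := exists_dec φ
  have : Dec (ρ * φ * ρ⁻¹) (L.map (List.map ρ)) := by
    refine ⟨?_, ?_, ?_, ?_⟩
    · intro w hw
      obtain ⟨v, hv, rfl⟩ := List.mem_map.1 hw
      simpa using hd.ne v hv
    · intro w hw
      obtain ⟨v, hv, rfl⟩ := List.mem_map.1 hw
      rw [← List.map_rotate, ← hd.rot v hv, List.map_map, List.map_map]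
      apply List.map_congr_left
      intro x _
      simp
    · rw [← List.map_flatten]
      exact hd.nodup.map ρ.injective
    · intro x
      rw [← List.map_flatten]
      exact List.mem_map.2 ⟨ρ⁻¹ x, hd.cover _, by simp⟩
  rw [this.permOrbits, hd.permOrbits, List.length_map]

theorem minimalPeriod_conj {D : Type*} (φ ρ : Equiv.Perm D) (x : D) :
    Function.minimalPeriod (ρ * φ * ρ⁻¹ : Equiv.Perm D) x = Function.minimalPeriod φ (ρ⁻¹ x) := by
  rw [Function.minimalPeriod_eq_minimalPeriod_iff]
  intro n
  unfold Function.IsPeriodicPt Function.IsFixedPt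
  rw [Equiv.Perm.iterate_eq_pow, Equiv.Perm.iterate_eq_pow, conj_pow]
  simp only [Equiv.Perm.mul_apply]
  rw [Equiv.Perm.eq_inv_iff_eq]

/-! ### Counting the edge involutions for a given face permutation -/

/-- `α` makes `φ` into a planar rooted map with face permutation `φ`. -/
def Cond {D : Type*} [Fintype D] (φ : Equiv.Perm D) (r : D) (α : Equiv.Perm D) : Prop :=
  (∀ d, α (α d) = d) ∧ (∀ d, α d ≠ d) ∧
  (∀ d : D, d ∈ MulAction.orbit ((Subgroup.closure {φ * α, α}) : Subgroup (Equiv.Perm D)) r) ∧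
  permOrbits (φ * α) + permOrbits φ = permOrbits α + 2

theorem mem_orbit_apply {D : Type*} {G : Subgroup (Equiv.Perm D)} {g : Equiv.Perm D} (hg : g ∈ G) {r x : D}
    (hx : x ∈ MulAction.orbit G r) : g x ∈ MulAction.orbit G r := by
  obtain ⟨h, rfl⟩ := hx
  exact ⟨⟨g, hg⟩ * h, rfl⟩

theorem mem_orbit_apply_iff {D : Type*} {G : Subgroup (Equiv.Perm D)} {g : Equiv.Perm D} (hg : g ∈ G) {r x : D} :
    g x ∈ MulAction.orbit G r ↔ x ∈ MulAction.orbit G r := by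
  constructor
  · intro h
    have := mem_orbit_apply (G.inv_mem hg) h
    simpa using this
  · exact mem_orbit_apply hg

theorem conn_iff {D : Type*} (φ α : Equiv.Perm D) (r : D) (a : List D) (ha : ∀ x ∈ a, φ.SameCycle r x)
    (hα : ∀ x, α (α x) = x) :
    Conn φ α [r :: a].flatten ↔
      ∀ d : D, d ∈ MulAction.orbit ((Subgroup.closure {φ * α, α}) : Subgroup (Equiv.Perm D)) r := by
  have m1 : φ * α ∈ Subgroup.closure {φ * α, α} := Subgroup.subset_closure (by simp)
  have m2 : α ∈ Subgroup.closure {φ * α, α} := Subgroup.subset_closure (by simp)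
  have m3 : φ ∈ Subgroup.closure {φ * α, α} := by
    have := Subgroup.mul_mem _ m1 (Subgroup.inv_mem _ m2)
    simpa using this
  constructor
  · intro h
    apply h {d | d ∈ MulAction.orbit ((Subgroup.closure {φ * α, α}) : Subgroup (Equiv.Perm D)) r}
    · intro x hx
      have hr : r ∈ MulAction.orbit ((Subgroup.closure {φ * α, α}) : Subgroup (Equiv.Perm D)) r :=
        MulAction.mem_orbit_self r
      have hrx : φ.SameCycle r x := by
        simp only [List.flatten_cons, List.flatten_nil, List.append_nil, List.mem_cons] at hx
        rcases hx with rfl | hx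
        · rfl
        · exact ha x hx
      exact closed_sameCycle (X := MulAction.orbit ((Subgroup.closure {φ * α, α}) : Subgroup (Equiv.Perm D)) r)
        (fun x => mem_orbit_apply_iff m3) hr hrx
    · intro x
      exact mem_orbit_apply_iff m3
    · intro x hx
      exact mem_orbit_apply m2 hx
  · intro h X h1 h2 h3 d
    obtain ⟨⟨g, hg⟩, hd⟩ := h d
    have hα' : ∀ x, α x ∈ X ↔ x ∈ X := by
      intro x
      refine ⟨fun hx => ?_, h3 x⟩
      have := h3 _ hx
      rwa [hα] at this
    have key : ∀ g ∈ Subgroup.closure {φ * α, α}, ∀ x, g x ∈ X ↔ x ∈ X := by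
      intro g hg
      induction hg using Subgroup.closure_induction with
      | mem g hg =>
        rcases hg with rfl | hg
        · intro x; rw [Equiv.Perm.mul_apply, h2, hα']
        · rw [Set.mem_singleton_iff] at hg
          rw [hg]; exact hα'
      | one => intro x; rfl
      | mul g g' _ _ i1 i2 =>
        intro x
        rw [Equiv.Perm.mul_apply, i1, i2]
      | inv g _ i =>
        intro x
        rw [← i]; simp
    rw [← hd]
    exact (key g hg r).2 (h1 r (by simp))

theorem card_cond {D : Type*} [Fintype D] (k : ℕ) (hD : Fintype.card D = 4 * (k + 1)) (φ : Equiv.Perm D)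
    (hφ : ∀ x, Function.minimalPeriod φ x = 4) (r : D) :
    (Nat.card {α // Cond φ r α} : ℚ) = 4 ^ k * (k.factorial : ℚ) * coeff k (serB 4) := by
  classical
  obtain ⟨L, hL, hLw⟩ := exists_dec φ
  obtain ⟨a, L', hd, hp, hc⟩ := Dec.pick (L := L) (U := []) (by simpa using hL) (hL.cover r)
  rw [List.append_nil] at hd
  have hlen : ∀ w ∈ (r :: a) :: L', w.length = 4 := by
    intro w hw
    have h1 := hc (fun _ => true)
    have h2 : w.length ∈ L.map (List.countP (fun _ => true)) := by
      rw [h1.mem_iff]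
      exact List.mem_map.2 ⟨w, hw, by simp⟩
    obtain ⟨v, hv, hvw⟩ := List.mem_map.1 h2
    obtain ⟨x, rfl⟩ := hLw v hv
    rw [← hvw]
    simp [cword_length, hφ]
  have hk : L'.length = k := by
    have h1 := hd.card
    rw [length_flatten_const hlen, hD, List.length_cons] at h1
    omega
  have hlive : ∀ w ∈ (r :: a) :: L', live (Finset.univ : Finset D) w = 4 := by
    intro w hw
    rw [← hlen w hw]
    simp [live]
  have hm := main_count (Finset.univ : Finset D).card φ [r :: a] L' Finset.univ le_rfl (by simpa using hd)
    (fun w hw => hlive w (List.mem_cons_of_mem _ hw))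
  rw [hk] at hm
  have hw : wt (Finset.univ : Finset D) [r :: a] = serB 4 := by
    simp [wt, hlive (r :: a) List.mem_cons_self]
  rw [hw] at hm
  rw [← hm]
  congr 1
  unfold cnt
  rw [← Fintype.card_subtype, Nat.card_eq_fintype_card]
  apply Fintype.card_congr
  apply Equiv.subtypeEquivRight
  intro α
  have hφo := permOrbits_mul φ 4 hφ
  have ha : ∀ x ∈ a, φ.SameCycle r x := fun x hx =>
    hd.sameCycle (w := r :: a) List.mem_cons_self List.mem_cons_self (List.mem_cons_of_mem _ hx)
  unfold Cond Good IsInv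
  simp only [Finset.mem_univ, iff_true, Finset.card_univ, hD, List.length_singleton]
  rw [and_assoc]
  refine and_congr_right fun hα => and_congr_right fun hα2 => ?_
  have hαo := permOrbits_mul α 2 (minimalPeriod_two α hα hα2)
  rw [conn_iff φ α r a ha hα]
  refine and_congr_right fun _ => ?_
  omega

/-! ### Counting permutations all of whose cycles have length four -/

/-- Permutations all of whose cycles have length four. -/
abbrev PFour (D : Type*) := {φ : Equiv.Perm D // ∀ x, Function.minimalPeriod φ x = 4}

theorem card_cycleOf {D : Type*} [Fintype D] [DecidableEq D] (φ : Equiv.Perm D) (x : D) (hx : φ x ≠ x) :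
    (φ.cycleOf x).support.card = Function.minimalPeriod φ x := by
  rw [← cword_length, ← List.toFinset_card_of_nodup (cword_nodup φ x)]
  congr 1
  ext y
  rw [List.mem_toFinset, mem_cword, Equiv.Perm.mem_support_cycleOf_iff]
  simp [hx]

theorem pFour_iff {D : Type*} [Fintype D] [DecidableEq D] (n : ℕ) (hD : Fintype.card D = 4 * n) (φ : Equiv.Perm D) :
    (∀ x, Function.minimalPeriod φ x = 4) ↔ φ.cycleType = Multiset.replicate n 4 := by
  constructor
  · intro h
    have hne : ∀ x, φ x ≠ x := by
      intro x hx
      have := Function.minimalPeriod_eq_one_iff_isFixedPt.2 (show Function.IsFixedPt φ x from hx)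
      rw [h] at this; omega
    have h4 : ∀ m ∈ φ.cycleType, m = 4 := by
      intro m hm
      rw [Equiv.Perm.cycleType_def, Multiset.mem_map] at hm
      obtain ⟨c, hc, rfl⟩ := hm
      rw [Finset.mem_val] at hc
      have hc1 := (Equiv.Perm.mem_cycleFactorsFinset_iff.1 hc).1
      obtain ⟨x, hx⟩ := hc1.nonempty_support
      rw [Equiv.Perm.cycle_is_cycleOf hx hc]
      simp only [Function.comp_apply]
      rw [card_cycleOf φ x (hne x), h]
    have h5 := Multiset.eq_replicate_card.2 h4
    have h6 := φ.sum_cycleType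
    have h7 : φ.support = Finset.univ := by
      ext x; simp [hne x]
    rw [h7, Finset.card_univ, hD, h5, Multiset.sum_replicate] at h6
    rw [h5]
    congr 1
    simp at h6
    omega
  · intro h x
    have h6 := φ.sum_cycleType
    rw [h, Multiset.sum_replicate, smul_eq_mul, mul_comm, ← hD] at h6
    have h7 : φ.support = Finset.univ := (Finset.card_eq_iff_eq_univ _).1 h6.symm
    have hx : φ x ≠ x := by
      rw [← Equiv.Perm.mem_support, h7]; simp
    rw [← card_cycleOf φ x hx]
    have : (φ.cycleOf x).support.card ∈ φ.cycleType := by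
      rw [Equiv.Perm.cycleType_def, Multiset.mem_map]
      refine ⟨φ.cycleOf x, ?_, rfl⟩
      rw [Finset.mem_val, Equiv.Perm.cycleOf_mem_cycleFactorsFinset_iff, h7]
      simp
    rw [h] at this
    exact Multiset.eq_of_mem_replicate this

theorem card_pFour {D : Type*} [Fintype D] (n : ℕ) (hn : 1 ≤ n) (hD : Fintype.card D = 4 * n) :
    Nat.card (PFour D) * (4 ^ n * n.factorial) = (4 * n).factorial := by
  classical
  have h := Equiv.Perm.card_of_cycleType_mul_eq D (Multiset.replicate n 4)
  rw [if_pos] at h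
  · rw [hD] at h
    rw [← h]
    congr 1
    · rw [← Fintype.card_subtype, Nat.card_eq_fintype_card]
      apply Fintype.card_congr
      apply Equiv.subtypeEquivRight
      exact pFour_iff n hD
    · rw [Multiset.sum_replicate, Multiset.prod_replicate, Multiset.toFinset_replicate, if_neg (by omega)]
      simp [mul_comm]
  · constructor
    · rw [hD]; simp [mul_comm]
    · intro a ha
      rw [Multiset.eq_of_mem_replicate ha]; norm_num

/-! ### Counting labelled quadrangulations -/

/-- A quadrangulation is a face permutation, a root and an edge involution. -/
def quadEquiv (n : ℕ) : Quadrangulation n ≃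
    (Σ φ : PFour (Fin (4 * n)), Σ r : Fin (4 * n), {α // Cond φ.1 r α}) where
  toFun Q := ⟨⟨Q.σ * Q.α, fun x => by rw [← card_orbit_eq]; exact Q.hquad x⟩, Q.root, Q.α, by
    have h : Q.σ * Q.α * Q.α = Q.σ := by
      ext d; simp [Q.hinv]
    refine ⟨Q.hinv, Q.hfix, ?_, ?_⟩
    · rw [h]; exact Q.hconn
    · rw [h]; exact Q.heuler⟩
  invFun p :=
    have h : p.1.1 * p.2.2.1 * p.2.2.1 = p.1.1 := by
      ext d; simp [p.2.2.2.1]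
    { σ := p.1.1 * p.2.2.1
      α := p.2.2.1
      root := p.2.1
      hinv := p.2.2.2.1
      hfix := p.2.2.2.2.1
      hconn := p.2.2.2.2.2.1
      heuler := by rw [h]; exact p.2.2.2.2.2.2
      hquad := by rw [h]; intro d; rw [card_orbit_eq]; exact p.1.2 d }
  left_inv Q := by
    have h : Q.σ * Q.α * Q.α = Q.σ := by
      ext d; simp [Q.hinv]
    cases Q
    simp only [Quadrangulation.mk.injEq, and_true]
    exact h
  right_inv p := by
    obtain ⟨⟨φ, hφ⟩, r, ⟨α, hα⟩⟩ := p
    have h : φ * α * α = φ := by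
      ext d; simp [hα.1]
    have aux : ∀ (ψ : Equiv.Perm (Fin (4 * n))) (hψ : ∀ x, Function.minimalPeriod ψ x = 4) (hc : Cond ψ r α), ψ = φ →
        (⟨⟨ψ, hψ⟩, r, ⟨α, hc⟩⟩ : Σ φ : PFour (Fin (4 * n)), Σ r : Fin (4 * n), {α // Cond φ.1 r α}) =
          ⟨⟨φ, hφ⟩, r, ⟨α, hα⟩⟩ := by
      rintro _ _ _ rfl; rfl
    exact aux _ _ _ h

theorem card_quad (k : ℕ) :
    (Nat.card (Quadrangulation (k + 1)) : ℚ) =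
      (4 * (k + 1)).factorial * coeff k (serB 4) := by
  classical
  rw [Nat.card_congr (quadEquiv (k + 1)), Nat.card_sigma]
  simp only [Nat.card_sigma]
  push_cast
  have h1 : ∀ (φ : PFour (Fin (4 * (k + 1)))) (r : Fin (4 * (k + 1))), (Nat.card {α // Cond φ.1 r α} : ℚ) =
      4 ^ k * (k.factorial : ℚ) * coeff k (serB 4) := fun φ r => card_cond k (by simp) φ.1 φ.2 r
  simp only [h1, Finset.sum_const, Finset.card_univ, nsmul_eq_mul, Fintype.card_fin]
  have h2 := card_pFour (D := Fin (4 * (k + 1))) (k + 1) (by omega) (by simp)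
  rw [Nat.card_eq_fintype_card] at h2
  rw [← h2]
  push_cast [Nat.factorial_succ]
  ring

/-! ### The relabelling action -/

/-- Relabelling the darts of a quadrangulation. -/
def Quadrangulation.relabel {n : ℕ} (ρ : Equiv.Perm (Fin (4 * n))) (Q : Quadrangulation n) : Quadrangulation n where
  σ := ρ * Q.σ * ρ⁻¹
  α := ρ * Q.α * ρ⁻¹
  root := ρ Q.root
  hinv d := by simp [Q.hinv]
  hfix d := by
    intro h
    apply Q.hfix (ρ⁻¹ d)
    apply ρ.injective
    simpa using h
  hconn d := by
    obtain ⟨⟨g, hg⟩, hd⟩ := Q.hconn (ρ⁻¹ d)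
    have key : ∀ g ∈ Subgroup.closure {Q.σ, Q.α},
        ρ * g * ρ⁻¹ ∈ Subgroup.closure {ρ * Q.σ * ρ⁻¹, ρ * Q.α * ρ⁻¹} := by
      intro g hg
      have h1 := Subgroup.mem_map_of_mem (MulAut.conj ρ).toMonoidHom hg
      rw [MonoidHom.map_closure] at h1
      simpa [Set.image_pair] using h1
    refine ⟨⟨_, key g hg⟩, ?_⟩
    have h2 : g Q.root = ρ⁻¹ d := hd
    show (ρ * g * ρ⁻¹) (ρ Q.root) = d
    simp [h2]
  heuler := by
    have h : ρ * Q.σ * ρ⁻¹ * (ρ * Q.α * ρ⁻¹) = ρ * (Q.σ * Q.α) * ρ⁻¹ := by group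
    rw [h, permOrbits_conj, permOrbits_conj, permOrbits_conj]
    exact Q.heuler
  hquad d := by
    have h : ρ * Q.σ * ρ⁻¹ * (ρ * Q.α * ρ⁻¹) = ρ * (Q.σ * Q.α) * ρ⁻¹ := by group
    rw [h, card_orbit_eq, minimalPeriod_conj, ← card_orbit_eq]
    exact Q.hquad _

theorem quad_ext {n : ℕ} {Q Q' : Quadrangulation n} (h1 : Q.σ = Q'.σ) (h2 : Q.α = Q'.α) (h3 : Q.root = Q'.root) :
    Q = Q' := by
  cases Q; cases Q'
  simp only at h1 h2 h3
  subst h1 h2 h3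
  rfl

instance quadAction (n : ℕ) : MulAction (Equiv.Perm (Fin (4 * n))) (Quadrangulation n) where
  smul ρ Q := Q.relabel ρ
  one_smul Q := by
    apply quad_ext
    · show 1 * Q.σ * 1⁻¹ = Q.σ
      simp
    · show 1 * Q.α * 1⁻¹ = Q.α
      simp
    · rfl
  mul_smul ρ τ Q := by
    apply quad_ext
    · show (ρ * τ) * Q.σ * (ρ * τ)⁻¹ = ρ * (τ * Q.σ * τ⁻¹) * ρ⁻¹
      group
    · show (ρ * τ) * Q.α * (ρ * τ)⁻¹ = ρ * (τ * Q.α * τ⁻¹) * ρ⁻¹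
      group
    · rfl

theorem quadIso_iff {n : ℕ} (Q Q' : Quadrangulation n) :
    QuadIso Q Q' ↔ ∃ ρ : Equiv.Perm (Fin (4 * n)), ρ • Q = Q' := by
  constructor
  · rintro ⟨ρ, h1, h2, h3⟩
    refine ⟨ρ, quad_ext ?_ ?_ h3⟩
    · show ρ * Q.σ * ρ⁻¹ = Q'.σ
      rw [mul_inv_eq_iff_eq_mul]
      exact Equiv.ext h1
    · show ρ * Q.α * ρ⁻¹ = Q'.α
      rw [mul_inv_eq_iff_eq_mul]
      exact Equiv.ext h2
  · rintro ⟨ρ, rfl⟩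
    refine ⟨ρ, ?_, ?_, rfl⟩
    · intro d
      show ρ (Q.σ d) = (ρ * Q.σ * ρ⁻¹) (ρ d)
      simp
    · intro d
      show ρ (Q.α d) = (ρ * Q.α * ρ⁻¹) (ρ d)
      simp

theorem quad_stabilizer {n : ℕ} (Q : Quadrangulation n) :
    MulAction.stabilizer (Equiv.Perm (Fin (4 * n))) Q = ⊥ := by
  rw [eq_bot_iff]
  intro ρ hρ
  rw [MulAction.mem_stabilizer_iff] at hρ
  have h1 : ρ * Q.σ * ρ⁻¹ = Q.σ := congrArg Quadrangulation.σ hρ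
  have h2 : ρ * Q.α * ρ⁻¹ = Q.α := congrArg Quadrangulation.α hρ
  have h3 : ρ Q.root = Q.root := congrArg Quadrangulation.root hρ
  rw [mul_inv_eq_iff_eq_mul] at h1 h2
  have key : ∀ g ∈ Subgroup.closure {Q.σ, Q.α}, ρ * g = g * ρ := by
    have : Subgroup.closure {Q.σ, Q.α} ≤ Subgroup.centralizer {ρ} := by
      rw [Subgroup.closure_le]
      rintro g (rfl | rfl)
      · exact Subgroup.mem_centralizer_singleton_iff.2 h1.symm
      · exact Subgroup.mem_centralizer_singleton_iff.2 h2.symm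
    intro g hg
    exact (Subgroup.mem_centralizer_singleton_iff.1 (this hg)).symm
  rw [Subgroup.mem_bot]
  ext1 d
  obtain ⟨⟨g, hg⟩, hd⟩ := Q.hconn d
  have h4 : g Q.root = d := hd
  rw [← h4, ← Equiv.Perm.mul_apply, key g hg, Equiv.Perm.mul_apply, h3]
  rfl

theorem card_quot (n : ℕ) : Nat.card (Quadrangulation n) =
    Nat.card (Quot (QuadIso (n := n))) * (4 * n).factorial := by
  rw [Nat.card_congr (MulAction.selfEquivOrbitsQuotientProd (G := Equiv.Perm (Fin (4 * n))) quad_stabilizer),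
    Nat.card_prod]
  congr 1
  · apply Nat.card_congr
    refine Quot.congr (Equiv.refl _) ?_
    intro Q Q'
    show MulAction.orbitRel _ _ Q Q' ↔ _
    rw [Equiv.refl_apply, Equiv.refl_apply, quadIso_iff]
    constructor
    · intro h
      exact (MulAction.orbitRel_apply.1 ((MulAction.orbitRel _ _).symm h))
    · intro h
      exact (MulAction.orbitRel _ _).symm (MulAction.orbitRel_apply.2 h)
  · simp [Nat.card_eq_fintype_card, Fintype.card_perm]

end TutteHelpers

/-- Tutte's formula: the number of rooted quadrangulations with `n` faces (up to
isomorphism) equals `(2/(n+2))·(3^n/(n+1))·binom(2n,n)`. -/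
theorem tutte_formula (n : ℕ) (hn : 1 ≤ n) :
    (n + 2) * ((n + 1) * Nat.card (Quot (QuadIso (n := n)))) =
      2 * (3 ^ n * Nat.choose (2 * n) n) := by
  obtain ⟨k, rfl⟩ := Nat.exists_eq_add_of_le' hn
  have h1 := card_quad k
  rw [card_quot] at h1
  have h2 : ((4 * (k + 1)).factorial : ℚ) ≠ 0 := by exact_mod_cast Nat.factorial_ne_zero _
  have h3 : (Nat.card (Quot (QuadIso (n := k + 1))) : ℚ) = PowerSeries.coeff k (serB 4) := by
    apply mul_right_cancel₀ h2
    rw [← Nat.cast_mul, h1]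
    ring
  have h4 := coeff_serB_four k
  rw [← h3] at h4
  have h5 : (((k + 1 + 2) * ((k + 1 + 1) * Nat.card (Quot (QuadIso (n := k + 1)))) : ℕ) : ℚ) =
      ((2 * (3 ^ (k + 1) * Nat.choose (2 * (k + 1)) (k + 1)) : ℕ) : ℚ) := by
    push_cast
    rw [← h4]
    ring
  exact_mod_cast h5
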